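/- Under the stated hypotheses on G, if n ≥ 13 then the eigenvector x satisfies x_k + x_0 > x_1 + x_{n−1}. -/

import Mathlib

open Matrix

/-- The signless Laplacian `Q(G) = D(G) + A(G)` of a finite simple graph `G`. -/
noncomputable def signlessLaplacian {V : Type*} [Fintype V] (G : SimpleGraph V) :
    Matrix V V ℝ :=
  letI := Classical.decEq V
  letI : DecidableRel G.Adj := Classical.decRel _
  Matrix.diagonal (fun v => (G.degree v : ℝ)) + G.adjMatrix ℝ

/-- The `Q`-index of `G`: the largest eigenvalue of the signless Laplacian `Q(G)`. -/
noncomputable def qIndex {V : Type*} [Fintype V] (G : SimpleGraph V) : ℝ :=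
  letI := Classical.decEq V
  sSup (spectrum ℝ (signlessLaplacian G))

/-!
Positivity of the eigenvector gives `q ≥ deg vₖ = n - 3 ≥ 10`. The closed neighborhood of `v_{n-2}`
is contained in that of `vₖ`, and so is that of `v₃` once `v₂` is exchanged for `v_{n-1}`; hence
`x vₖ` dominates `x v_{n-2}` and `x v₃`. With `t = q - 2` and `s = x v₁ + x v_{n-1}`, the rows of
`v₀` and `v₂` give `t * x v₀ = s` and `t * x v₂ ≤ s + x vₖ`, so the sum of the rows of `v₁` and
`v_{n-1}` bounds `s` in terms of `x vₖ` alone. If `x vₖ + x v₀ ≤ s`, this bound becomes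
`t ^ 2 * (t - 8) + 1 ≤ 0`, contradicting `t ≥ 8`.
-/

section Eigenvector

variable {V : Type*} [Fintype V] {G : SimpleGraph V} {x : V → ℝ} {q : ℝ}

theorem signlessLaplacian_mulVec_apply [DecidableRel G.Adj] (v : V) :
    (signlessLaplacian G).mulVec x v = ∑ u ∈ G.neighborFinset v, (x v + x u) := by
  obtain rfl : ‹DecidableRel G.Adj› = Classical.decRel _ := Subsingleton.elim _ _
  simp [signlessLaplacian, Matrix.add_mulVec, Matrix.mulVec_diagonal, Finset.sum_add_distrib]

theorem eigenvalue_mul_eq_sum_neighborFinset [DecidableRel G.Adj]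
    (heig : (signlessLaplacian G).mulVec x = q • x) (v : V) :
    q * x v = ∑ u ∈ G.neighborFinset v, (x v + x u) := by
  rw [← signlessLaplacian_mulVec_apply, heig, Pi.smul_apply, smul_eq_mul]

theorem eigenvalue_mul_eq_sum_list (heig : (signlessLaplacian G).mulVec x = q • x) {v : V}
    {l : List V} (hl : l.Nodup) (hv : G.neighborSet v = {u | u ∈ l}) :
    q * x v = (l.map fun u => x v + x u).sum := by
  classical
  have hfin : G.neighborFinset v = l.toFinset := by
    ext u
    simp [← SimpleGraph.mem_neighborSet, hv]
  rw [eigenvalue_mul_eq_sum_neighborFinset heig, hfin, List.sum_toFinset _ hl]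

theorem degree_le_of_pos_eigenvector [DecidableRel G.Adj] (hpos : ∀ i, 0 < x i)
    (heig : (signlessLaplacian G).mulVec x = q • x) (v : V) : (G.degree v : ℝ) ≤ q := by
  refine le_of_mul_le_mul_right ?_ (hpos v)
  calc (G.degree v : ℝ) * x v = ∑ _u ∈ G.neighborFinset v, x v := by simp
    _ ≤ ∑ u ∈ G.neighborFinset v, (x v + x u) :=
      Finset.sum_le_sum fun u _ => le_add_of_nonneg_right (hpos u).le
    _ = q * x v := (eigenvalue_mul_eq_sum_neighborFinset heig v).symm

theorem eigenvalue_add_one_mul_eq [DecidableEq V] [DecidableRel G.Adj]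
    (heig : (signlessLaplacian G).mulVec x = q • x) (v : V) :
    (q + 1) * x v =
      G.degree v * x v + ∑ u ∈ insert v (G.neighborFinset v), x u := by
  rw [Finset.sum_insert (G.notMem_neighborFinset_self v), add_mul,
    eigenvalue_mul_eq_sum_neighborFinset heig, Finset.sum_add_distrib]
  simp only [Finset.sum_const, SimpleGraph.card_neighborFinset_eq_degree, nsmul_eq_mul]
  ring

theorem mul_sub_le_sub_of_closedNeighbor_exchange [DecidableRel G.Adj] (hpos : ∀ i, 0 < x i)
    (heig : (signlessLaplacian G).mulVec x = q • x) {v w a b : V}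
    (hb : b ∈ insert w (G.neighborSet w))
    (hsub : insert v (G.neighborSet v) \ {a} ⊆ insert w (G.neighborSet w) \ {b}) :
    (q - G.degree w + 1) * (x v - x w) ≤ x a - x b := by
  classical
  set A := insert v (G.neighborFinset v) with hA
  set B := insert w (G.neighborFinset w) with hB
  have hAB : A.erase a ⊆ B.erase b := by
    simpa [← Finset.coe_subset, hA, hB] using hsub
  have hbB : b ∈ B := by simpa [hB] using hb
  have hinsert : A ⊆ insert a (B.erase b) := Finset.subset_insert_iff.mpr hAB
  have hdeg : (G.degree v : ℝ) ≤ G.degree w := by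
    have hcard : A.card ≤ B.card :=
      calc A.card ≤ (insert a (B.erase b)).card := Finset.card_le_card hinsert
        _ ≤ (B.erase b).card + 1 := Finset.card_insert_le _ _
        _ = B.card := Finset.card_erase_add_one hbB
    have hcardA : A.card = G.degree v + 1 :=
      Finset.card_insert_of_notMem (G.notMem_neighborFinset_self v)
    have hcardB : B.card = G.degree w + 1 :=
      Finset.card_insert_of_notMem (G.notMem_neighborFinset_self w)
    exact_mod_cast (by omega : G.degree v ≤ G.degree w)
  have hsum : ∑ u ∈ A, x u ≤ x a + (∑ u ∈ B, x u - x b) :=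
    calc ∑ u ∈ A, x u ≤ ∑ u ∈ insert a (B.erase b), x u :=
          Finset.sum_le_sum_of_subset_of_nonneg hinsert fun u _ _ => (hpos u).le
      _ ≤ x a + ∑ u ∈ B.erase b, x u := by
          by_cases ha : a ∈ B.erase b
          · rw [Finset.insert_eq_of_mem ha]
            exact le_add_of_nonneg_left (hpos a).le
          · rw [Finset.sum_insert ha]
      _ = x a + (∑ u ∈ B, x u - x b) := by rw [Finset.sum_erase_eq_sub hbB]
  linarith [eigenvalue_add_one_mul_eq heig v, eigenvalue_add_one_mul_eq heig w,
    mul_le_mul_of_nonneg_right hdeg (hpos v).le]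

theorem le_of_closedNeighbor_subset (hpos : ∀ i, 0 < x i)
    (heig : (signlessLaplacian G).mulVec x = q • x) {v w : V}
    (hsub : insert v (G.neighborSet v) ⊆ insert w (G.neighborSet w)) : x v ≤ x w := by
  classical
  have hexch : (q - G.degree w + 1) * (x v - x w) ≤ x w - x w :=
    mul_sub_le_sub_of_closedNeighbor_exchange hpos heig (Set.mem_insert _ _)
      (Set.sdiff_subset_sdiff_left hsub)
  have hdeg : (G.degree w : ℝ) ≤ q := degree_le_of_pos_eigenvector hpos heig w
  rw [sub_self] at hexch
  exact sub_nonpos.mp (nonpos_of_mul_nonpos_right hexch (by linarith))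

end Eigenvector

/-- The part of a maximal outer-planar graph of type `D_2` seen from its vertex `v₀`: the names
`v₀, v₁, v₂, v₃, vₖ` are those of the paper, `w` is `v_{n-1}` and `u` is `v_{n-2}`. Outer-planarity
is not encoded; of the rest of the graph only two comparisons of closed neighborhoods with that of
`vₖ` are kept. -/
structure IsD2Configuration {V : Type*} (G : SimpleGraph V) (v₀ v₁ v₂ v₃ vₖ u w : V) : Prop where
  neighborSet_v₀ : G.neighborSet v₀ = {v₁, w}
  neighborSet_v₁ : G.neighborSet v₁ = {v₀, v₂, v₃, vₖ, w}
  neighborSet_v₂ : G.neighborSet v₂ = {v₁, v₃}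
  neighborSet_w : G.neighborSet w = {v₀, v₁, vₖ, u}
  nodup_v₁ : [v₀, v₂, v₃, vₖ, w].Nodup
  nodup_w : [v₀, v₁, vₖ, u].Nodup
  closedNeighbor_u : insert u (G.neighborSet u) ⊆ insert vₖ (G.neighborSet vₖ)
  closedNeighbor_v₃ :
    insert v₃ (G.neighborSet v₃) \ {v₂} ⊆ insert vₖ (G.neighborSet vₖ) \ {w}

namespace IsD2Configuration

theorem of_neighborSet_eq_compl {V : Type*} {G : SimpleGraph V} {v₀ v₁ v₂ v₃ vₖ u w : V}
    (hnodup : [v₀, v₁, v₂, v₃, vₖ, u, w].Nodup) (h₀ : G.neighborSet v₀ = {v₁, w})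
    (h₁ : G.neighborSet v₁ = {v₀, v₂, v₃, vₖ, w}) (h₂ : G.neighborSet v₂ = {v₁, v₃})
    (hw : G.neighborSet w = {v₀, v₁, vₖ, u}) (hₖ : G.neighborSet vₖ = {v₀, v₂, vₖ}ᶜ) :
    IsD2Configuration G v₀ v₁ v₂ v₃ vₖ u w := by
  have adj_v₀ (v : V) : G.Adj v v₀ ↔ v = v₁ ∨ v = w := by
    rw [G.adj_comm, ← SimpleGraph.mem_neighborSet, h₀, Set.mem_insert_iff, Set.mem_singleton_iff]
  have adj_v₂ (v : V) : G.Adj v v₂ ↔ v = v₁ ∨ v = v₃ := by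
    rw [G.adj_comm, ← SimpleGraph.mem_neighborSet, h₂, Set.mem_insert_iff, Set.mem_singleton_iff]
  simp only [List.nodup_cons, List.mem_cons, List.not_mem_nil, not_or] at hnodup
  have u_not_adj_v₀ : ¬G.Adj u v₀ := by grind
  have u_not_adj_v₂ : ¬G.Adj u v₂ := by grind
  have v₃_not_adj_v₀ : ¬G.Adj v₃ v₀ := by grind
  have v₃_not_adj_w : ¬G.Adj v₃ w := by
    rw [G.adj_comm, ← SimpleGraph.mem_neighborSet, hw]
    grind
  have mem_closedNeighbor_vₖ {v : V} (hv₀ : v ≠ v₀) (hv₂ : v ≠ v₂) :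
      v ∈ insert vₖ (G.neighborSet vₖ) := by
    grind
  refine ⟨h₀, h₁, h₂, hw, by grind, by grind, ?_, ?_⟩
  · rintro v (rfl | hadj)
    · exact mem_closedNeighbor_vₖ (by grind) (by grind)
    · exact mem_closedNeighbor_vₖ (fun h => u_not_adj_v₀ (h ▸ hadj))
        (fun h => u_not_adj_v₂ (h ▸ hadj))
  · rintro v ⟨rfl | hadj, hv₂⟩
    · exact ⟨mem_closedNeighbor_vₖ (by grind) hv₂, by grind⟩
    · exact ⟨mem_closedNeighbor_vₖ (fun h => v₃_not_adj_v₀ (h ▸ hadj)) hv₂,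
        fun h => v₃_not_adj_w (h ▸ hadj)⟩

section Eigenvector

variable {V : Type*} [Fintype V] {G : SimpleGraph V} {v₀ v₁ v₂ v₃ vₖ u w : V} {x : V → ℝ} {q : ℝ}

theorem eigenvalue_mul_v₀ (h : IsD2Configuration G v₀ v₁ v₂ v₃ vₖ u w)
    (heig : (signlessLaplacian G).mulVec x = q • x) : (q - 2) * x v₀ = x v₁ + x w := by
  have hadj : G.Adj v₁ w := by simp [← SimpleGraph.mem_neighborSet, h.neighborSet_v₁]
  have hrow := eigenvalue_mul_eq_sum_list heig (v := v₀) (l := [v₁, w]) (by simpa using hadj.ne)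
    (by simp [h.neighborSet_v₀, Set.ext_iff])
  simp only [List.map_cons, List.map_nil, List.sum_cons, List.sum_nil] at hrow
  linarith

theorem eigenvalue_mul_v₁ (h : IsD2Configuration G v₀ v₁ v₂ v₃ vₖ u w)
    (heig : (signlessLaplacian G).mulVec x = q • x) :
    (q - 5) * x v₁ = x v₀ + x v₂ + x v₃ + x vₖ + x w := by
  have hrow := eigenvalue_mul_eq_sum_list heig (v := v₁) h.nodup_v₁
    (by simp [h.neighborSet_v₁, Set.ext_iff])
  simp only [List.map_cons, List.map_nil, List.sum_cons, List.sum_nil] at hrow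
  linarith

theorem eigenvalue_mul_v₂ (h : IsD2Configuration G v₀ v₁ v₂ v₃ vₖ u w)
    (heig : (signlessLaplacian G).mulVec x = q • x) : (q - 2) * x v₂ = x v₁ + x v₃ := by
  have hadj : G.Adj v₁ v₃ := by simp [← SimpleGraph.mem_neighborSet, h.neighborSet_v₁]
  have hrow := eigenvalue_mul_eq_sum_list heig (v := v₂) (l := [v₁, v₃]) (by simpa using hadj.ne)
    (by simp [h.neighborSet_v₂, Set.ext_iff])
  simp only [List.map_cons, List.map_nil, List.sum_cons, List.sum_nil] at hrow
  linarith

theorem eigenvalue_mul_w (h : IsD2Configuration G v₀ v₁ v₂ v₃ vₖ u w)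
    (heig : (signlessLaplacian G).mulVec x = q • x) :
    (q - 4) * x w = x v₀ + x v₁ + x vₖ + x u := by
  have hrow := eigenvalue_mul_eq_sum_list heig (v := w) h.nodup_w
    (by simp [h.neighborSet_w, Set.ext_iff])
  simp only [List.map_cons, List.map_nil, List.sum_cons, List.sum_nil] at hrow
  linarith

-- If `x vₖ < x v₃`, the exchange of `v₂` for `w` bounds the gap `x v₃ - x vₖ` by `x v₂ - x w`,
-- while the rows of `v₂` and `w` bound `(q - 2) * (x v₂ - x w)` by the gap.
theorem apply_v₃_le_apply_vₖ (h : IsD2Configuration G v₀ v₁ v₂ v₃ vₖ u w) (hpos : ∀ i, 0 < x i)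
    (heig : (signlessLaplacian G).mulVec x = q • x) (hq : 3 < q) : x v₃ ≤ x vₖ := by
  classical
  have hadj : G.Adj w vₖ := by simp [← SimpleGraph.mem_neighborSet, h.neighborSet_w]
  have hexch : (q - G.degree vₖ + 1) * (x v₃ - x vₖ) ≤ x v₂ - x w :=
    mul_sub_le_sub_of_closedNeighbor_exchange hpos heig (Set.mem_insert_of_mem _ hadj.symm)
      h.closedNeighbor_v₃
  have hdeg : (G.degree vₖ : ℝ) ≤ q := degree_le_of_pos_eigenvector hpos heig vₖ
  have hrows : (q - 2) * (x v₂ - x w) ≤ x v₃ - x vₖ := by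
    linarith [h.eigenvalue_mul_v₂ heig, h.eigenvalue_mul_w heig, hpos v₀, hpos u, hpos w]
  by_contra! hlt
  have hgap : x v₃ - x vₖ ≤ x v₂ - x w :=
    (le_mul_of_one_le_left (by linarith) (by linarith)).trans hexch
  have hlt' : x v₂ - x w < (q - 2) * (x v₂ - x w) :=
    lt_mul_of_one_lt_left (by linarith) (by linarith)
  linarith

theorem apply_u_le_apply_vₖ (h : IsD2Configuration G v₀ v₁ v₂ v₃ vₖ u w) (hpos : ∀ i, 0 < x i)
    (heig : (signlessLaplacian G).mulVec x = q • x) : x u ≤ x vₖ :=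
  le_of_closedNeighbor_subset hpos heig h.closedNeighbor_u

theorem mul_apply_v₁_add_apply_w_le (h : IsD2Configuration G v₀ v₁ v₂ v₃ vₖ u w)
    (hpos : ∀ i, 0 < x i) (heig : (signlessLaplacian G).mulVec x = q • x) (hq : 3 < q) :
    (q - 6) * (x v₁ + x w) ≤ 2 * x v₀ + x v₂ + 4 * x vₖ := by
  linarith [h.eigenvalue_mul_v₁ heig, h.eigenvalue_mul_w heig, hpos w,
    h.apply_v₃_le_apply_vₖ hpos heig hq, h.apply_u_le_apply_vₖ hpos heig]

end Eigenvector

end IsD2Configuration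

theorem degree_eq_card_sub_ncard_of_neighborSet_eq_compl {V : Type*} [Fintype V]
    {G : SimpleGraph V} [DecidableRel G.Adj] {v : V} {s : Set V} (hv : G.neighborSet v = sᶜ) :
    G.degree v = Fintype.card V - s.ncard := by
  rw [← SimpleGraph.card_neighborSet_eq_degree, ← Nat.card_eq_fintype_card,
    ← Nat.card_eq_fintype_card, ← Set.ncard_compl, ← hv, Nat.card_coe_set_eq]

theorem nodup_labels {n k : ℕ} (hk1 : 4 ≤ k) (hk2 : k ≤ n - 3) :
    ([⟨0, by omega⟩, ⟨1, by omega⟩, ⟨2, by omega⟩, ⟨3, by omega⟩, ⟨k, by omega⟩,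
      ⟨n - 2, by omega⟩, ⟨n - 1, by omega⟩] : List (Fin n)).Nodup := by
  simp only [List.nodup_cons, List.mem_cons, List.not_mem_nil, List.nodup_nil, Fin.mk.injEq,
    or_false, not_false_eq_true, and_true]
  omega

theorem insert_one_setOf_three_le_eq_compl {n k : ℕ} (hk1 : 3 ≤ k) (hk2 : k < n) :
    insert ⟨1, by omega⟩ {u : Fin n | 3 ≤ u.val ∧ u ≠ ⟨k, hk2⟩} =
      ({⟨0, by omega⟩, ⟨2, by omega⟩, ⟨k, hk2⟩} : Set (Fin n))ᶜ := by
  ext v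
  simp only [Set.mem_insert_iff, Set.mem_ofPred_eq, Set.mem_compl_iff, Set.mem_singleton_iff,
    Fin.ext_iff, ne_eq]
  omega

theorem stmt_15_general {V : Type*} [Fintype V] {G : SimpleGraph V} [DecidableRel G.Adj]
    {v₀ v₁ v₂ v₃ vₖ u w : V} (h : IsD2Configuration G v₀ v₁ v₂ v₃ vₖ u w)
    (hdeg : 10 ≤ G.degree vₖ) {x : V → ℝ} (hpos : ∀ i, 0 < x i) {q : ℝ}
    (heig : (signlessLaplacian G).mulVec x = q • x) : x v₁ + x w < x vₖ + x v₀ := by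
  have hq : 10 ≤ q :=
    (by exact_mod_cast hdeg : (10 : ℝ) ≤ G.degree vₖ).trans
      (degree_le_of_pos_eigenvector hpos heig vₖ)
  obtain ⟨t, rfl⟩ : ∃ t, q = t + 2 := ⟨q - 2, by ring⟩
  set s := x v₁ + x w
  have hs_pos : 0 < s := add_pos (hpos v₁) (hpos w)
  have hv₀ : t * x v₀ = s := by linarith [h.eigenvalue_mul_v₀ heig]
  have hv₂ : t * x v₂ ≤ s + x vₖ := by
    linarith [h.eigenvalue_mul_v₂ heig, h.apply_v₃_le_apply_vₖ hpos heig (by linarith), hpos w]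
  have hbound : (t - 4) * s ≤ 2 * x v₀ + x v₂ + 4 * x vₖ := by
    linarith [h.mul_apply_v₁_add_apply_w_le hpos heig (by linarith)]
  have ht : 8 ≤ t := by linarith
  have : 0 < t := by linarith
  by_contra! hle
  have hvₖ : t * x vₖ ≤ (t - 1) * s :=
    calc t * x vₖ ≤ t * (s - x v₀) := by gcongr; linarith
      _ = (t - 1) * s := by rw [mul_sub, hv₀, sub_one_mul]
  have hupper : t * (t * ((t - 4) * s)) ≤ t * (3 * s) + (4 * t + 1) * ((t - 1) * s) :=
    calc t * (t * ((t - 4) * s)) ≤ t * (t * (2 * x v₀ + x v₂ + 4 * x vₖ)) := by gcongr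
      _ = t * (2 * (t * x v₀) + t * x v₂ + 4 * (t * x vₖ)) := by ring
      _ ≤ t * (2 * s + (s + x vₖ) + 4 * (t * x vₖ)) := by rw [hv₀]; gcongr
      _ = t * (3 * s) + (4 * t + 1) * (t * x vₖ) := by ring
      _ ≤ t * (3 * s) + (4 * t + 1) * ((t - 1) * s) := by gcongr
  have hpoly : 0 < (t ^ 2 * (t - 8) + 1) * s := by
    have : 0 ≤ t - 8 := sub_nonneg.mpr ht
    positivity
  linarith

/-- for the maximal outer-planar graph of type `D_2` with `Δ = n - 3`,
if `n ≥ 13` then the Perron eigenvector satisfies `x_k + x_0 > x_1 + x_{n-1}`. -/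
theorem stmt_15 (n k : ℕ) (hn : 8 ≤ n) (hk1 : 4 ≤ k) (hk2 : k ≤ n - 3)
    (G : SimpleGraph (Fin n))
    (h0 : G.neighborSet ⟨0, by omega⟩ = {⟨1, by omega⟩, ⟨n - 1, by omega⟩})
    (h1 : G.neighborSet ⟨1, by omega⟩ =
      {⟨0, by omega⟩, ⟨2, by omega⟩, ⟨3, by omega⟩, ⟨k, by omega⟩, ⟨n - 1, by omega⟩})
    (h2 : G.neighborSet ⟨2, by omega⟩ = {⟨1, by omega⟩, ⟨3, by omega⟩})
    (hlast : G.neighborSet ⟨n - 1, by omega⟩ =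
      {⟨0, by omega⟩, ⟨1, by omega⟩, ⟨k, by omega⟩, ⟨n - 2, by omega⟩})
    (hk' : G.neighborSet ⟨k, by omega⟩ =
      insert ⟨1, by omega⟩ {u : Fin n | 3 ≤ u.val ∧ u ≠ ⟨k, by omega⟩})
    (x : Fin n → ℝ) (hpos : ∀ i, 0 < x i)
    (heig : (signlessLaplacian G).mulVec x = qIndex G • x)
    (hn13 : 13 ≤ n) :
    x ⟨1, by omega⟩ + x ⟨n - 1, by omega⟩ < x ⟨k, by omega⟩ + x ⟨0, by omega⟩ := by
  classical
  rw [insert_one_setOf_three_le_eq_compl (by omega) (by omega)] at hk'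
  have hdeg : n - 3 ≤ G.degree ⟨k, by omega⟩ := by
    rw [degree_eq_card_sub_ncard_of_neighborSet_eq_compl hk', Fintype.card_fin]
    exact Nat.sub_le_sub_left (by simpa [Set.ncard_eq_toFinset_card'] using Finset.card_le_three) n
  exact stmt_15_general (.of_neighborSet_eq_compl (nodup_labels hk1 hk2) h0 h1 h2 hlast hk')
    (by omega) hpos heig
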